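/- arXiv:1805.10770 — 6 statements merged into one kernel-verified Lean document; each statement's English description precedes it below -/
import Mathlib

section
/- Let R be a (not necessarily commutative) ring and let T be a binary word of length N with zero-positions T_0 of size m and one-positions T_1 of size n. For any elements α_1, …, α_m and β_1, …, β_n of R, the following identity holds: the sum over all bijections f : {1,…,m} → T_0 and all bijections g : {1,…,n} → T_1 of the products Φ_T^{f,g} equals the sum over all subsets I ⊆ {1,…,m} and J ⊆ {1,…,n} of (−1)^{m−|I|}(−1)^{n−|J|} times the product Γ'_N Γ'_{N−1} ⋯ Γ'_1, where Γ'_i = Σ_{p∈I} α_p if i ∈ T_0 and Γ'_i = Σ_{q∈J} β_q if i ∈ T_1. -/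
/-!
The identity is the polarization formula for multilinear maps, used twice. If `M` is multilinear in
`m` arguments, expanding `M (∑_{p ∈ I} α_p, …)` gives one term for each map `r` from the slots into
`I`. In the signed sum over `I` the term of `r` acquires the coefficient
`∑_{I ⊇ range r} (-1)^(m - |I|)`, which is `1` if `r` is surjective and `0` otherwise; on sets of
equal size the surjective maps are the bijections (`polarization`).

The ordered product `Γ_N ⋯ Γ_1` is `ℤ`-multilinear in its factors (`revProd`). Polarization applies
to the slots in `T₁` with those in `T₀` held fixed, then to the slots in `T₀`.
-/

open Finset

/-- The signs of the sets containing `A` cancel unless `A` is everything. -/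
lemma sum_superset_sign {m : ℕ} (A : Finset (Fin m)) :
    ∑ I : Finset (Fin m), (if A ⊆ I then (-1 : ℤ) ^ (m - #I) else 0)
      = if A = univ then 1 else 0 := by
  have h : ∑ I : Finset (Fin m), (if A ⊆ I then (-1 : ℤ) ^ (m - #I) else 0)
      = ∑ J ∈ (Aᶜ).powerset, (-1 : ℤ) ^ #J := by
    rw [← Finset.sum_filter]
    refine Finset.sum_nbij' (fun I => Iᶜ) (fun J => Jᶜ) ?_ ?_ ?_ ?_ ?_
    · intro I hI
      simpa using hI
    · intro J hJ
      simpa [subset_compl_comm] using hJ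
    · simp
    · simp
    · intro I _
      simp [card_compl]
  rw [h, sum_powerset_neg_one_pow_card]
  simp

/-- Polarization: the sum of a multilinear map over all bijective fillings of its slots is the
signed sum of its values at constant arguments. -/
lemma polarization {R V : Type*} [AddCommGroup R] [AddCommGroup V] {m : ℕ} {s : Type*}
    [Fintype s] [DecidableEq s] (hs : Fintype.card s = m)
    (M : MultilinearMap ℤ (fun _ : s => R) V) (α : Fin m → R) :
    ∑ f : Fin m ≃ s, M (fun i => α (f.symm i))
      = ∑ I : Finset (Fin m), (-1 : ℤ) ^ (m - #I) • M (fun _ => ∑ p ∈ I, α p) := by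
  have expand : ∀ I : Finset (Fin m), M (fun _ => ∑ p ∈ I, α p)
      = ∑ r : s → Fin m, if univ.image r ⊆ I then M (fun i => α (r i)) else 0 := by
    intro I
    rw [M.map_sum_finset (fun _ p => α p) (fun _ => I), ← Finset.sum_filter]
    refine Finset.sum_congr ?_ fun _ _ => rfl
    ext r
    simp [Fintype.mem_piFinset, image_subset_iff]
  have coeff : ∀ r : s → Fin m, ∑ I : Finset (Fin m),
      (-1 : ℤ) ^ (m - #I) • (if univ.image r ⊆ I then M (fun i => α (r i)) else 0)
      = if Function.Bijective r then M (fun i => α (r i)) else 0 := by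
    intro r
    have hb : Function.Bijective r ↔ univ.image r = univ := by
      rw [Fintype.bijective_iff_surjective_and_card]
      simp [hs, Finset.eq_univ_iff_forall, Function.Surjective]
    have h := congrArg (· • M (fun i => α (r i))) (sum_superset_sign (univ.image r))
    simp only [Finset.sum_smul, ite_smul, zero_smul, one_smul] at h
    simp only [hb, smul_ite, smul_zero]
    exact h
  simp only [expand, Finset.smul_sum]
  rw [Finset.sum_comm]
  simp only [coeff]
  rw [← Finset.sum_filter]
  refine Finset.sum_bij (fun f _ => ⇑f.symm) ?_ ?_ ?_ ?_
  · intro f _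
    simp
  · intro f _ g _ h
    exact Equiv.symm_bijective.injective (DFunLike.coe_injective h)
  · intro r hr
    exact ⟨(Equiv.ofBijective r (by simpa using hr)).symm, mem_univ _, rfl⟩
  · intro _ _
    rfl

/-- The product `v_N ⋯ v_1` in decreasing order of the indices, as a multilinear map. -/
def revProd (R : Type*) [Ring R] (N : ℕ) : MultilinearMap ℤ (fun _ : Fin N => R) R :=
  (MultilinearMap.mkPiAlgebraFin ℤ N R).domDomCongr Fin.revPerm

lemma revProd_apply {R : Type*} [Ring R] {N : ℕ} (v : Fin N → R) :
    revProd R N v = (List.ofFn v).reverse.prod := by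
  have h : (List.ofFn fun i => v i.rev) = (List.ofFn v).reverse := by
    refine List.ext_getElem (by simp) fun k h₁ h₂ => ?_
    simp only [List.getElem_ofFn, List.getElem_reverse, List.length_ofFn]
    congr 1
    ext
    simp only [Fin.val_rev]
    omega
  simp [revProd, h]

/-- For a binary word `t` of length `N` with `m` zero-positions and `n` one-positions, and
ring elements `α₁,…,α_m`, `β₁,…,β_n`, the sum over all bijections `f : [m] ≃ T₀`,
`g : [n] ≃ T₁` of the ordered products `Γ_N ⋯ Γ_1` (with `Γᵢ = α_{f⁻¹ i}` for `i ∈ T₀`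
and `Γᵢ = β_{g⁻¹ i}` for `i ∈ T₁`) equals the inclusion–exclusion sum over subsets
`I ⊆ [m]`, `J ⊆ [n]` of `(−1)^{m−|I|}(−1)^{n−|J|}` times the ordered product `Γ'_N ⋯ Γ'_1`
with `Γ'ᵢ = ∑_{p∈I} α_p` for `i ∈ T₀` and `Γ'ᵢ = ∑_{q∈J} β_q` for `i ∈ T₁`. -/
theorem bint_eval_vacuum_expansion (R : Type*) [Ring R] (N m n : ℕ) (t : Fin N → Bool)
    (hm : (Finset.univ.filter fun i : Fin N => t i = false).card = m)
    (hn : (Finset.univ.filter fun i : Fin N => t i = true).card = n)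
    (α : Fin m → R) (β : Fin n → R) :
    ∑ f : Fin m ≃ {i : Fin N // t i = false}, ∑ g : Fin n ≃ {i : Fin N // t i = true},
      ((List.ofFn fun i : Fin N =>
        if h : t i = false then α (f.symm ⟨i, h⟩)
        else β (g.symm ⟨i, by simpa using h⟩)).reverse).prod
    = ∑ I : Finset (Fin m), ∑ J : Finset (Fin n),
        (-1 : R) ^ (m - I.card) * (-1 : R) ^ (n - J.card) *
          ((List.ofFn fun i : Fin N =>
            if t i = false then ∑ p ∈ I, α p else ∑ q ∈ J, β q).reverse).prod := by
  simp only [← revProd_apply]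
  have hm' : Fintype.card {i : Fin N // t i = false} = m := by
    rw [Fintype.card_subtype, hm]
  have hn' : Fintype.card {i : Fin N // t i = true} = n := by
    rw [Fintype.card_subtype, hn]
  -- Polarize in the slots of `T₁`, the factors `x` in the slots of `T₀` being fixed.
  have ones : ∀ x : Fin N → R, ∑ g : Fin n ≃ {i : Fin N // t i = true},
      revProd R N (fun i => if h : t i = false then x i
        else β (g.symm ⟨i, by simpa using h⟩))
      = ∑ J : Finset (Fin n), (-1 : ℤ) ^ (n - #J) •
        revProd R N (fun i => if t i = false then x i else ∑ q ∈ J, β q) := by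
    intro x
    convert polarization hn'
      ((revProd R N).domDomRestrict (fun i => t i = true) (fun i => x i)) β using 3
    · rw [MultilinearMap.domDomRestrict_apply]
      congr 1
      funext i
      by_cases h : t i = true <;> simp [h]
    · rw [MultilinearMap.domDomRestrict_apply]
      congr 2
      funext i
      by_cases h : t i = true <;> simp [h]
  have zeros : ∀ y : R, ∑ f : Fin m ≃ {i : Fin N // t i = false},
      revProd R N (fun i => if h : t i = false then α (f.symm ⟨i, h⟩) else y)
      = ∑ I : Finset (Fin m), (-1 : ℤ) ^ (m - #I) •
        revProd R N (fun i => if t i = false then ∑ p ∈ I, α p else y) := by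
    intro y
    convert polarization hm'
      ((revProd R N).domDomRestrict (fun i => t i = false) (fun _ => y)) α using 3
    · rw [MultilinearMap.domDomRestrict_apply]
    · rw [MultilinearMap.domDomRestrict_apply]
      congr 2
  calc
    _ = ∑ f : Fin m ≃ {i : Fin N // t i = false}, ∑ J : Finset (Fin n), (-1 : ℤ) ^ (n - #J) •
        revProd R N (fun i => if h : t i = false then α (f.symm ⟨i, h⟩)
          else ∑ q ∈ J, β q) := by
      refine Finset.sum_congr rfl fun f _ => ?_
      -- Outside `T₀` the value of `x` is irrelevant; it is taken to be `0`.
      convert ones (fun i => if h : t i = false then α (f.symm ⟨i, h⟩) else 0) using 3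
      · funext i
        by_cases h : t i = false <;> simp [h]
      · congr 2
        funext i
        by_cases h : t i = false <;> simp [h]
    _ = _ := by
      rw [Finset.sum_comm]
      simp only [← Finset.smul_sum, zeros]
      simp only [Finset.smul_sum]
      rw [Finset.sum_comm]
      refine Finset.sum_congr rfl fun I _ => Finset.sum_congr rfl fun J _ => ?_
      rw [smul_smul, mul_comm, zsmul_eq_mul]
      push_cast
      rfl
end

section
/- Let k be a field of characteristic zero and R a unital associative k-algebra. Let T_1, …, T_r be binary words each containing exactly m zeros and exactly n ones, and let c_1, …, c_r ∈ k. Suppose that Σ_{s=1}^r c_s · w_{T_s}(α, β) = 0 for all α, β ∈ R. Then for all 0 ≤ k' ≤ m, 0 ≤ l ≤ n and all elements α_1, …, α_{k'}, β_1, …, β_l, γ, δ ∈ R we have Σ_{s=1}^r c_s · (Σ_{f,g} Φ_{T_s}^{f,g}) = 0, where the inner sum is over all injections f : {1,…,k'} → (T_s)_0 and g : {1,…,l} → (T_s)_1. -/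
/-!
Substitute `γ + ∑ x_p α_p` for `α` and `δ + ∑ y_q β_q` for `β` in the hypothesis, with scalars
`x_p, y_q : k`. Expanding each word multilinearly gives a sum over all ways `φ` of choosing one
summand at every position, each weighted by the monomial that counts how often every variable was
chosen. Since `k` is infinite, a polynomial identity with coefficients in `R` that holds at all
scalar points holds coefficientwise (`sum_coeff_eq_zero`). The coefficient of the squarefree
monomial `∏ x_p ∏ y_q` collects the choices using every variable exactly once; those that
respect the letters are the pairs of injections `(f, g)` (`sum_good_eq`).
-/

/-- `Γᵢ^{f,g}`: for a position `i` of the binary word `t`, the element `α_{f⁻¹ i}` if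
`i ∈ Im f`, `β_{g⁻¹ i}` if `i ∈ Im g`, `γ` if `i ∈ T₀ ∖ Im f` and `δ` if `i ∈ T₁ ∖ Im g`. -/
noncomputable def gammaFn {R : Type*} [Ring R] {N a b : ℕ} (t : Fin N → Bool)
    (f : Fin a ↪ {i : Fin N // t i = false}) (g : Fin b ↪ {i : Fin N // t i = true})
    (α : Fin a → R) (β : Fin b → R) (γ δ : R) (i : Fin N) : R :=
  if h0 : t i = false then
    if h : ∃ p, f p = ⟨i, h0⟩ then α h.choose else γ
  else
    if h : ∃ q, g q = ⟨i, by simpa using h0⟩ then β h.choose else δ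

/-- `Φ_T^{f,g} = Γ_N^{f,g} Γ_{N−1}^{f,g} ⋯ Γ_1^{f,g}`. -/
noncomputable def phiFn {R : Type*} [Ring R] {N a b : ℕ} (t : Fin N → Bool)
    (f : Fin a ↪ {i : Fin N // t i = false}) (g : Fin b ↪ {i : Fin N // t i = true})
    (α : Fin a → R) (β : Fin b → R) (γ δ : R) : R :=
  ((List.ofFn (gammaFn t f g α β γ δ)).reverse).prod

/-- The exponent vector contributed by one choice: `none` contributes the constant `1`, and
`some s` contributes the variable `x_s`. -/
noncomputable def choiceDeg {σ : Type*} (o : Option σ) : σ →₀ ℕ :=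
  o.elim 0 fun s => Finsupp.single s 1

/-- The exponent vector of the squarefree monomial in all the variables. -/
noncomputable def allOnes (σ : Type*) [Fintype σ] : σ →₀ ℕ :=
  Finsupp.equivFunOnFinite.symm fun _ => 1

/-- The summand selected by `o` at position `i` of `t`. Selecting a variable that belongs to the
other letter gives `0`, so that all positions share the same index type of choices. -/
def choiceVal {R : Type*} [Ring R] {N a b : ℕ} (t : Fin N → Bool)
    (α : Fin a → R) (β : Fin b → R) (γ δ : R) (i : Fin N) : Option (Fin a ⊕ Fin b) → R
  | none => if t i then δ else γ
  | some (Sum.inl p) => if t i then 0 else α p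
  | some (Sum.inr q) => if t i then β q else 0

open Classical in
/-- The choice function determined by a pair of injections: the position `f p` selects `α_p`, the
position `g q` selects `β_q`, and all others select `γ` or `δ`. -/
noncomputable def choiceOf {N a b : ℕ} {t : Fin N → Bool}
    (f : Fin a ↪ {i : Fin N // t i = false}) (g : Fin b ↪ {i : Fin N // t i = true})
    (i : Fin N) : Option (Fin a ⊕ Fin b) :=
  if h : ∃ p, (f p).1 = i then some (Sum.inl h.choose)
  else if h : ∃ q, (g q).1 = i then some (Sum.inr h.choose) else none

lemma choiceOf_eq_inl {N a b : ℕ} {t : Fin N → Bool}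
    (f : Fin a ↪ {i : Fin N // t i = false}) (g : Fin b ↪ {i : Fin N // t i = true})
    (i : Fin N) (p : Fin a) : choiceOf f g i = some (Sum.inl p) ↔ (f p).1 = i := by
  unfold choiceOf
  constructor
  · intro h
    split_ifs at h with h1 h2
    · have := h1.choose_spec
      simp only [Option.some.injEq, Sum.inl.injEq] at h
      rwa [h] at this
    · simp at h
  · intro h
    have h1 : ∃ p, (f p).1 = i := ⟨p, h⟩
    rw [dif_pos h1]
    have : h1.choose = p := f.injective (Subtype.ext (h1.choose_spec.trans h.symm))
    rw [this]

lemma choiceOf_eq_inr {N a b : ℕ} {t : Fin N → Bool}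
    (f : Fin a ↪ {i : Fin N // t i = false}) (g : Fin b ↪ {i : Fin N // t i = true})
    (i : Fin N) (q : Fin b) : choiceOf f g i = some (Sum.inr q) ↔ (g q).1 = i := by
  unfold choiceOf
  constructor
  · intro h
    split_ifs at h with h1 h2
    · simp at h
    · have := h2.choose_spec
      simp only [Option.some.injEq, Sum.inr.injEq] at h
      rwa [h] at this
  · intro h
    have h1 : ¬ ∃ p, (f p).1 = i := by
      rintro ⟨p, hp⟩
      have h2 := (f p).2
      have h3 := (g q).2
      rw [hp] at h2
      rw [h] at h3
      simp [h2] at h3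
    have h2 : ∃ q, (g q).1 = i := ⟨q, h⟩
    rw [dif_neg h1, dif_pos h2]
    have : h2.choose = q := g.injective (Subtype.ext (h2.choose_spec.trans h.symm))
    rw [this]

lemma gammaFn_eq_choiceVal {R : Type*} [Ring R] {N a b : ℕ} (t : Fin N → Bool)
    (f : Fin a ↪ {i : Fin N // t i = false}) (g : Fin b ↪ {i : Fin N // t i = true})
    (α : Fin a → R) (β : Fin b → R) (γ δ : R) (i : Fin N) :
    gammaFn t f g α β γ δ i = choiceVal t α β γ δ i (choiceOf f g i) := by
  unfold gammaFn
  rcases ho : choiceOf f g i with _ | p | q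
  · have hf : ∀ p, (f p).1 ≠ i := fun p hp => by
      rw [← choiceOf_eq_inl f g, ho] at hp; simp at hp
    have hg : ∀ p, (g p).1 ≠ i := fun p hp => by
      rw [← choiceOf_eq_inr f g, ho] at hp; simp at hp
    by_cases h0 : t i = false
    · rw [dif_pos h0, dif_neg]
      · simp [choiceVal, h0]
      · rintro ⟨p, hp⟩; exact hf p (by rw [hp])
    · rw [dif_neg h0, dif_neg]
      · simp [choiceVal, h0]
      · rintro ⟨p, hp⟩; exact hg p (by rw [hp])
  · have hp := (choiceOf_eq_inl f g i p).1 ho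
    have h0 : t i = false := hp ▸ (f p).2
    have h1 : ∃ p, f p = ⟨i, h0⟩ := ⟨p, Subtype.ext hp⟩
    rw [dif_pos h0, dif_pos h1]
    have : h1.choose = p := f.injective (h1.choose_spec.trans (Subtype.ext hp.symm))
    simp [choiceVal, h0, this]
  · have hq := (choiceOf_eq_inr f g i q).1 ho
    have h0 : t i = true := hq ▸ (g q).2
    have h1 : ∃ q, g q = ⟨i, h0⟩ := ⟨q, Subtype.ext hq⟩
    rw [dif_neg (by simp [h0]), dif_pos h1]
    have : h1.choose = q := g.injective (h1.choose_spec.trans (Subtype.ext hq.symm))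
    simp [choiceVal, h0, this]

lemma sum_choiceDeg_eq_allOnes_iff {σ : Type*} [Fintype σ] {N : ℕ} (φ : Fin N → Option σ) :
    ∑ i, choiceDeg (φ i) = allOnes σ ↔ ∀ s, ∃! i, φ i = some s := by
  classical
  rw [Finsupp.ext_iff]
  refine forall_congr' fun s => ?_
  have h : ∀ i, choiceDeg (φ i) s = if φ i = some s then 1 else 0 := by
    intro i
    rcases φ i with _ | u
    · simp [choiceDeg]
    · simp [choiceDeg, Finsupp.single_apply]
  rw [Finsupp.finsetSum_apply, Finset.sum_congr rfl fun i _ => h i, Finset.sum_boole]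
  simp [allOnes, Finset.card_eq_one, Finset.eq_singleton_iff_unique_mem, ExistsUnique]

open Classical in
/-- Pairs of injections correspond to choices using every variable exactly once; the remaining
choices with that property select a variable of the wrong letter somewhere, so their product
vanishes. -/
lemma sum_good_eq {R : Type*} [Ring R] {N a b : ℕ} (t : Fin N → Bool)
    (α : Fin a → R) (β : Fin b → R) (γ δ : R) :
    ∑ f : Fin a ↪ {i : Fin N // t i = false}, ∑ g : Fin b ↪ {i : Fin N // t i = true},
        phiFn t f g α β γ δ =
      ∑ φ : Fin N → Option (Fin a ⊕ Fin b) with ∑ i, choiceDeg (φ i) = allOnes _,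
        ((List.ofFn fun i => choiceVal t α β γ δ i (φ i)).reverse).prod := by
  rw [← Fintype.sum_prod_type']
  refine Finset.sum_of_injOn (fun x => choiceOf x.1 x.2) ?_ ?_ ?_ ?_
  · rintro ⟨f, g⟩ - ⟨f', g'⟩ - h
    have h' : ∀ i, choiceOf f g i = choiceOf f' g' i := fun i => congrFun h i
    refine Prod.ext (DFunLike.ext _ _ fun p => Subtype.ext ?_)
      (DFunLike.ext _ _ fun q => Subtype.ext ?_)
    · exact ((choiceOf_eq_inl f' g' _ p).1 ((h' _).symm.trans
        ((choiceOf_eq_inl f g _ p).2 rfl))).symm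
    · exact ((choiceOf_eq_inr f' g' _ q).1 ((h' _).symm.trans
        ((choiceOf_eq_inr f g _ q).2 rfl))).symm
  · rintro ⟨f, g⟩ -
    simp only [Finset.coe_filter, Finset.mem_univ, true_and, Set.mem_ofPred_eq]
    rw [sum_choiceDeg_eq_allOnes_iff]
    rintro (p | q)
    · simp [choiceOf_eq_inl]
    · simp [choiceOf_eq_inr]
  · intro φ hφ hnot
    rw [Finset.mem_filter, sum_choiceDeg_eq_allOnes_iff] at hφ
    have hφ := hφ.2
    by_contra hne
    have hval : ∀ i, choiceVal t α β γ δ i (φ i) ≠ 0 := by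
      intro i hi
      apply hne
      apply List.prod_eq_zero
      rw [List.mem_reverse, List.mem_ofFn]
      exact ⟨i, hi⟩
    have hl : ∀ i p, φ i = some (Sum.inl p) → t i = false := by
      intro i p h
      by_contra h0
      exact hval i (by simp [h, choiceVal, h0])
    have hr : ∀ i q, φ i = some (Sum.inr q) → t i = true := by
      intro i p h
      by_contra h0
      exact hval i (by simp [h, choiceVal, h0])
    choose pos hpos huniq using hφ
    apply hnot
    refine ⟨(⟨fun p => ⟨pos (Sum.inl p), hl _ _ (hpos _)⟩, ?_⟩,
      ⟨fun q => ⟨pos (Sum.inr q), hr _ _ (hpos _)⟩, ?_⟩), by simp, ?_⟩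
    · intro p p' h
      have h := congrArg φ (Subtype.ext_iff.1 h)
      simpa [hpos] using h
    · intro p p' h
      have h := congrArg φ (Subtype.ext_iff.1 h)
      simpa [hpos] using h
    · funext i
      refine Option.ext fun s => ?_
      have key : ∀ s, pos s = i ↔ φ i = some s := fun s =>
        ⟨fun h => h ▸ hpos s, fun h => (huniq s i h).symm⟩
      rcases s with p | q
      · exact (choiceOf_eq_inl _ _ i p).trans (key _)
      · exact (choiceOf_eq_inr _ _ i q).trans (key _)
  · rintro ⟨f, g⟩ -
    simp only [phiFn]
    congr 3
    funext i
    exact gammaFn_eq_choiceVal t f g α β γ δ i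

/-- The value at `x` of the monomial with exponent `choiceDeg o`. -/
def choiceWt {k σ : Type*} [One k] (x : σ → k) (o : Option σ) : k := o.elim 1 x

open Classical in
/-- Extraction of a coefficient from a polynomial identity with coefficients in a vector space;
linear functionals reduce it to polynomials over the infinite field `k`. -/
lemma sum_coeff_eq_zero {k M σ ι : Type*} [Field k] [Infinite k] [AddCommGroup M] [Module k M]
    [Fintype σ] [Fintype ι] {N : ℕ} (φ : ι → Fin N → Option σ) (v : ι → M)
    (h : ∀ x : σ → k, ∑ j, (∏ i, choiceWt x (φ j i)) • v j = 0) (e : σ →₀ ℕ) :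
    ∑ j with ∑ i, choiceDeg (φ j i) = e, v j = 0 := by
  rw [← Module.forall_dual_apply_eq_zero_iff k]
  intro L
  have hQ : (∑ j, MvPolynomial.monomial (∑ i, choiceDeg (φ j i)) (L (v j)) :
      MvPolynomial σ k) = 0 := by
    refine MvPolynomial.funext fun x => ?_
    have hx := congrArg L (h x)
    rw [map_sum, map_zero] at hx
    rw [map_sum, map_zero, ← hx]
    refine Finset.sum_congr rfl fun j _ => ?_
    have h1 : ∀ o : Option σ,
        MvPolynomial.eval x (MvPolynomial.monomial (choiceDeg o) (1 : k)) = choiceWt x o := by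
      rintro (_ | s) <;> simp [choiceDeg, choiceWt, MvPolynomial.eval_monomial]
    have h2 : (MvPolynomial.monomial (∑ i, choiceDeg (φ j i)) (L (v j)) : MvPolynomial σ k) =
        MvPolynomial.C (L (v j)) * ∏ i, MvPolynomial.monomial (choiceDeg (φ j i)) 1 := by
      rw [← MvPolynomial.monomial_sum_one, MvPolynomial.C_mul_monomial, mul_one]
    rw [h2, map_mul, map_prod, MvPolynomial.eval_C, map_smul, smul_eq_mul, mul_comm]
    simp only [h1]
  have := congrArg (MvPolynomial.coeff e) hQ
  rw [MvPolynomial.coeff_sum] at this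
  simp only [MvPolynomial.coeff_monomial, MvPolynomial.coeff_zero] at this
  rw [map_sum, Finset.sum_filter]
  exact this

/-- Multilinear expansion of a word evaluated at `γ + ∑ x_p α_p` and `δ + ∑ y_q β_q`. -/
lemma word_expand {k R : Type*} [Field k] [Ring R] [Algebra k R] {N a b : ℕ} (t : Fin N → Bool)
    (α : Fin a → R) (β : Fin b → R) (γ δ : R) (x : Fin a ⊕ Fin b → k) :
    ((List.ofFn fun i => if t i then δ + ∑ q, x (Sum.inr q) • β q
        else γ + ∑ p, x (Sum.inl p) • α p).reverse).prod =
      ∑ φ : Fin N → Option (Fin a ⊕ Fin b), (∏ i, choiceWt x (φ i)) •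
        ((List.ofFn fun i => choiceVal t α β γ δ i (φ i)).reverse).prod := by
  classical
  let F : MultilinearMap k (fun _ : Fin N => R) R :=
    (MultilinearMap.mkPiAlgebraFin k N R).domDomCongr Fin.revPerm
  have hF : ∀ u : Fin N → R, ((List.ofFn u).reverse).prod = F u := by
    intro u
    simp only [F, MultilinearMap.domDomCongr_apply, MultilinearMap.mkPiAlgebraFin_apply]
    congr 1
    apply List.ext_getElem
    · simp
    · intro i h1 h2
      simp only [List.getElem_reverse, List.getElem_ofFn, Fin.revPerm_apply]
      congr 1
      ext
      simp [Fin.rev]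
      omega
  simp only [hF]
  have hsum : (fun i => if t i then δ + ∑ q, x (Sum.inr q) • β q
      else γ + ∑ p, x (Sum.inl p) • α p) =
      fun i => ∑ o, choiceWt x o • choiceVal t α β γ δ i o := by
    funext i
    rw [Fintype.sum_option, Fintype.sum_sum_type]
    cases h : t i <;> simp [choiceWt, choiceVal, h]
  rw [hsum, MultilinearMap.map_sum]
  exact Finset.sum_congr rfl fun φ _ => F.map_smul_univ _ _


/-- If binary words `T₁, …, T_r`, each with exactly `m` zeros and `n` ones, satisfy
`∑ₛ cₛ • w_{Tₛ}(α, β) = 0` for all `α, β` in a `k`-algebra `R` (char `k` = 0), then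
the corresponding linear combinations of sums of `Φ_{Tₛ}^{f,g}` over injections
`f : [k'] ↪ (Tₛ)₀`, `g : [l] ↪ (Tₛ)₁` also vanish. -/
theorem bint_lincomb_zero_on_kets (k : Type*) [Field k] [CharZero k]
    (R : Type*) [Ring R] [Algebra k R]
    (m n r : ℕ) (T : Fin r → Fin (m + n) → Bool)
    (hm : ∀ s, (Finset.univ.filter fun i => T s i = false).card = m)
    (hn : ∀ s, (Finset.univ.filter fun i => T s i = true).card = n)
    (c : Fin r → k)
    (hdep : ∀ α β : R,
      ∑ s, c s • ((List.ofFn fun i => if T s i then β else α).reverse).prod = 0)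
    (k' l : ℕ) (hk : k' ≤ m) (hl : l ≤ n)
    (α : Fin k' → R) (β : Fin l → R) (γ δ : R) :
    ∑ s, c s •
      (∑ f : Fin k' ↪ {i : Fin (m + n) // T s i = false},
        ∑ g : Fin l ↪ {i : Fin (m + n) // T s i = true},
          phiFn (T s) f g α β γ δ) = 0 := by
  classical
  have key := sum_coeff_eq_zero (k := k) (M := R)
    (ι := Fin r × (Fin (m + n) → Option (Fin k' ⊕ Fin l))) (fun j => j.2)
    (fun j => c j.1 • ((List.ofFn fun i =>
      choiceVal (T j.1) α β γ δ i (j.2 i)).reverse).prod)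
    (fun x => by
      have h := hdep (γ + ∑ p, x (Sum.inl p) • α p) (δ + ∑ q, x (Sum.inr q) • β q)
      simp only [word_expand, Finset.smul_sum] at h
      rw [Fintype.sum_prod_type, ← h]
      refine Finset.sum_congr rfl fun s _ => Finset.sum_congr rfl fun φ _ => ?_
      exact smul_comm _ _ _)
    (allOnes _)
  rw [Finset.sum_filter, Fintype.sum_prod_type] at key
  rw [← key]
  refine Finset.sum_congr rfl fun s _ => ?_
  rw [sum_good_eq, Finset.smul_sum, Finset.sum_filter]
  exact Finset.sum_congr rfl fun φ _ => by congr
end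

section
/- Let k be a field of characteristic zero and n ≥ 1. There exists a nonzero element p of the free (noncommutative) k-algebra on two generators x and y such that for all n×n matrices α, β over k, the image of p under the unique k-algebra homomorphism from the free algebra to the matrix ring M_n(k) sending x to α and y to β is the zero matrix. -/
/-!
The identity is the standard polynomial `∑ σ, sign σ • w (σ 0) * ⋯ * w (σ (N - 1))` with
`N = n ^ 2 + 1`, evaluated at the elements `w i = x ^ i * y`. It is alternating and multilinear in
the `w i`, so it vanishes on matrices, where any `n ^ 2 + 1` elements are linearly dependent. It is
nonzero in the free algebra because the words `x ^ i₀ y x ^ i₁ y ⋯` determine the exponents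
`i₀, i₁, …` (`wordProd_injective`), so distinct permutations contribute distinct monomials.
-/

namespace MatrixIdentity

/-- The word `x ^ i * y` in the free monoid on the letters `x = 0`, `y = 1`. -/
def word (i : ℕ) : FreeMonoid (Fin 2) :=
  FreeMonoid.of 0 ^ i * FreeMonoid.of 1

lemma word_mul_inj (a b : ℕ) (u v : FreeMonoid (Fin 2)) (h : word a * u = word b * v) :
    a = b ∧ u = v := by
  induction a generalizing b with
  | zero =>
    cases b with
    | zero => exact ⟨rfl, mul_left_cancel h⟩
    | succ b =>
      have h' := congrArg FreeMonoid.toList h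
      simp [word, pow_succ', mul_assoc] at h'
  | succ a ih =>
    cases b with
    | zero =>
      have h' := congrArg FreeMonoid.toList h
      simp [word, pow_succ', mul_assoc] at h'
    | succ b =>
      have h' : word a * u = word b * v := by
        simp only [word, pow_succ', mul_assoc] at h ⊢
        exact mul_left_cancel h
      obtain ⟨h1, h2⟩ := ih b h'
      exact ⟨by rw [h1], h2⟩

lemma wordProd_injective (l m : List ℕ) (h : (l.map word).prod = (m.map word).prod) :
    l = m := by
  induction l generalizing m with
  | nil =>
    cases m with
    | nil => rfl
    | cons b m =>
      have h' := congrArg FreeMonoid.length h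
      simp [word] at h'
      omega
  | cons a l ih =>
    cases m with
    | nil =>
      have h' := congrArg FreeMonoid.length h
      simp [word] at h'
    | cons b m =>
      simp only [List.map_cons, List.prod_cons] at h
      obtain ⟨h1, h2⟩ := word_mul_inj a b _ _ h
      rw [h1, ih m h2]

/-- The standard polynomial of degree `N`, as an alternating map on a `k`-algebra. -/
noncomputable def standard (k A : Type*) [Field k] [Ring A] [Algebra k A] (N : ℕ) :
    A [⋀^Fin N]→ₗ[k] A :=
  MultilinearMap.alternatization (MultilinearMap.mkPiAlgebraFin k N A)

lemma standard_apply (k : Type*) {A : Type*} [Field k] [Ring A] [Algebra k A] (N : ℕ)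
    (v : Fin N → A) :
    standard k A N v =
      ∑ σ : Equiv.Perm (Fin N), Equiv.Perm.sign σ • (List.ofFn fun i => v (σ i)).prod := by
  simp [standard, MultilinearMap.alternatization_apply]

lemma map_standard (k : Type*) {A B : Type*} [Field k] [Ring A] [Algebra k A] [Ring B]
    [Algebra k B] (N : ℕ) (f : A →ₐ[k] B) (v : Fin N → A) :
    f (standard k A N v) = standard k B N (fun i => f (v i)) := by
  simp only [standard_apply, map_sum, Units.smul_def, map_zsmul, map_list_prod, List.map_ofFn]
  rfl

lemma standard_word_ne_zero (k : Type*) [Field k] (N : ℕ) :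
    standard k (MonoidAlgebra k (FreeMonoid (Fin 2))) N
      (fun i => MonoidAlgebra.of k _ (word i)) ≠ 0 := by
  intro h
  have key : ∀ σ : Equiv.Perm (Fin N),
      (List.ofFn fun i => MonoidAlgebra.of k (FreeMonoid (Fin 2)) (word (σ i))).prod =
        MonoidAlgebra.of k _ (((List.ofFn fun i => ((σ i : Fin N) : ℕ)).map word).prod) := by
    intro σ
    rw [map_list_prod, List.map_map, List.map_ofFn]
    rfl
  rw [standard_apply] at h
  simp only [key] at h
  -- The coefficient at the monomial of the identity permutation is `1`.
  have h1 := congrArg (fun f => f.coeff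
    (((List.ofFn fun i : Fin N => ((1 : Equiv.Perm (Fin N)) i : ℕ)).map word).prod)) h
  simp only [MonoidAlgebra.coeff_sum, Finsupp.finsetSum_apply, MonoidAlgebra.coeff_zero,
    Finsupp.zero_apply, Units.smul_def, MonoidAlgebra.coeff_smul_apply,
    MonoidAlgebra.of_apply, MonoidAlgebra.coeff_single] at h1
  rw [Finset.sum_eq_single 1] at h1
  · simp at h1
  · intro σ _ hσ
    rw [Finsupp.single_eq_of_ne, smul_zero]
    intro hw
    refine hσ (Equiv.ext fun i => Fin.ext ?_)
    exact (congrFun (List.ofFn_injective (wordProd_injective _ _ hw)) i).symm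
  · simp

end MatrixIdentity

open MatrixIdentity in
/-- For a field `k` of characteristic zero and `n ≥ 1`, there is a nonzero noncommutative
polynomial in two variables which vanishes identically on `n × n` matrices over `k`. -/
theorem exists_polynomial_identity_matrices (k : Type*) [Field k] [CharZero k]
    (n : ℕ) (hn : 1 ≤ n) :
    ∃ p : FreeAlgebra k (Fin 2), p ≠ 0 ∧
      ∀ α β : Matrix (Fin n) (Fin n) k,
        (FreeAlgebra.lift k ![α, β]) p = 0 := by
  let e := FreeAlgebra.equivMonoidAlgebraFreeMonoid (R := k) (X := Fin 2)
  refine ⟨e.symm (standard k (MonoidAlgebra k (FreeMonoid (Fin 2))) (n ^ 2 + 1)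
      (fun i => MonoidAlgebra.of k _ (word i))), ?_, fun α β => ?_⟩
  · rw [Ne, map_eq_zero_iff _ e.symm.injective]
    exact standard_word_ne_zero k _
  · have h := map_standard k (n ^ 2 + 1)
      ((FreeAlgebra.lift k ![α, β]).comp (e.symm : _ →ₐ[k] _))
      (fun i : Fin (n ^ 2 + 1) => MonoidAlgebra.of k _ (word i))
    refine Eq.trans h (AlternatingMap.map_linearDependent _ _ fun hli => ?_)
    have hc := hli.fintype_card_le_finrank
    rw [Module.finrank_matrix] at hc
    simp at hc
    nlinarith
end

section
/- Let k be a field of characteristic zero and n ≥ 1. For all n×n matrices α, β over k, the standard polynomial of degree 2n evaluated at the matrices α, αβ, αβ², …, αβ^{2n−1} vanishes; that is, Σ_{σ ∈ S_{2n}} sgn(σ) · (αβ^{σ(1)−1})(αβ^{σ(2)−1}) ⋯ (αβ^{σ(2n)−1}) = 0 in M_n(k). -/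
/-!
The standard polynomial of degree `2n` is the alternatization of the multilinear map
`(x₁, …, x₂ₙ) ↦ x₁ ⋯ x₂ₙ`, so it vanishes at any linearly dependent family. By Cayley–Hamilton the
powers `1, β, …, βⁿ` satisfy a nontrivial linear relation, and left multiplication by `α` carries it
to one among `α, αβ, …, αβⁿ`. Since `n < 2n`, all of these occur among the `2n` arguments.
-/

/-- The coefficients of the characteristic polynomial of `β` give the linear relation. -/
theorem not_linearIndependent_mul_pow {k : Type*} [Field k] {n m : ℕ} (hnm : n < m)
    (α β : Matrix (Fin n) (Fin n) k) :
    ¬ LinearIndependent k fun i : Fin m => α * β ^ (i : ℕ) := by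
  rw [Fintype.not_linearIndependent_iff]
  have hdeg : β.charpoly.natDegree = n := by
    simp [Matrix.charpoly_natDegree_eq_dim]
  refine ⟨fun i => β.charpoly.coeff i, ?_, ⟨n, hnm⟩, ?_⟩
  · have hCH := Matrix.aeval_self_charpoly β
    rw [Polynomial.aeval_eq_sum_range' (hdeg.trans_lt hnm), Finset.sum_range] at hCH
    simp only [← mul_smul_comm, ← Finset.mul_sum, hCH, mul_zero]
  · have hlead : β.charpoly.coeff n = 1 := by
      have h := (Matrix.charpoly_monic β).coeff_natDegree
      rwa [hdeg] at h
    simp [hlead]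

/-- For `n × n` matrices `α, β` over a field of characteristic zero, the standard polynomial
of degree `2n` evaluated at `α, αβ, αβ², …, αβ^{2n−1}` vanishes:
`∑_{σ ∈ S_{2n}} sgn(σ) (αβ^{σ(1)−1}) ⋯ (αβ^{σ(2n)−1}) = 0`. -/
theorem standard_identity_at_alpha_beta_powers (k : Type*) [Field k] [CharZero k]
    (n : ℕ) (hn : 1 ≤ n) (α β : Matrix (Fin n) (Fin n) k) :
    ∑ σ : Equiv.Perm (Fin (2 * n)),
      (Equiv.Perm.sign σ : ℤ) •
        ((List.ofFn fun i : Fin (2 * n) => α * β ^ (σ i : ℕ)).prod) = 0 := by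
  have h := AlternatingMap.map_linearDependent
    (MultilinearMap.alternatization
      (MultilinearMap.mkPiAlgebraFin k (2 * n) (Matrix (Fin n) (Fin n) k)))
    _ (not_linearIndependent_mul_pow (by omega : n < 2 * n) α β)
  rw [MultilinearMap.alternatization_apply] at h
  exact h
end

section
/- Let k be a field of characteristic zero, let d ≥ 1, and let T_1, …, T_r ∈ {0,1}^* be pairwise distinct binary words each of length at most d. If n is an integer with 2n > d, then the functions M_n(k) × M_n(k) → M_n(k), (α, β) ↦ w_{T_s}(α, β), for s = 1, …, r, are linearly independent over k: if c_1, …, c_r ∈ k satisfy Σ_{s=1}^r c_s · w_{T_s}(α, β) = 0 for all α, β ∈ M_n(k), then c_1 = ⋯ = c_r = 0. -/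
/-!
The proof is the staircase argument for the absence of polynomial identities of degree `< 2n`
in `M_n(k)`.

Since `k` is infinite, the vanishing of `∑ c_s w_{T_s}` on `M_n(k)` extends to matrices over the
polynomial ring `k[x_0, x_1, …]` (`wordEval_sum_polynomial`). Fix one word and let
`L = l_0 ⋯ l_{N-1}` be its reversal, so that `w` multiplies the letters of `L` from left to right.
Consider the walk on the vertices `0, …, n-1` whose steps are alternately a loop `u → u` (step
`2u`) and an edge `u → u+1` (step `2u+1`); it fits because `N ≤ 2n - 1`. Let the matrix of the
letter `b` be the sum of `x_i E_{⌊i/2⌋, ⌊(i+1)/2⌋}` over those `i` with `l_i = b`. The entry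
`(0, ⌊N/2⌋)` of a product of these matrices is a sum over walks spelling the given word, and the
only walk using each step `0, …, N-1` exactly once takes them in order, so it spells `L`. Hence
the coefficient of `x_0 ⋯ x_{N-1}` in that entry is `1` for the word `L` and `0` for every other
word (`coeff_walkPoly`), which isolates the coefficient of the chosen word.
-/

/-- `w_T(α, β) = a_N ⋯ a_1` where `a_i = α` if the `i`-th digit of `T` is `0` and `a_i = β`
if it is `1`. -/
def wordEval {R : Type*} [Monoid R] (T : List Bool) (α β : R) : R :=
  (T.reverse.map fun b => if b then β else α).prod

open MvPolynomial

/-- The weight of step `i` of the staircase of `L` when the letter `b` is read: `x_i` if the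
`i`-th letter of `L` is `b`, and `0` otherwise, in particular for `i` beyond the end of `L`. -/
noncomputable def stepWeight (k : Type*) [Field k] (L : List Bool) (b : Bool) (i : ℕ) :
    MvPolynomial ℕ k :=
  if L[i]? = some b then X i else 0

/-- The staircase matrix of the letter `b`: loops `u → u` of weight `stepWeight (2u)` and edges
`u → u + 1` of weight `stepWeight (2u + 1)`. -/
noncomputable def stairMatrix (k : Type*) [Field k] (L : List Bool) (n : ℕ) (b : Bool) :
    Matrix (Fin n) (Fin n) (MvPolynomial ℕ k) :=
  Matrix.of fun u v =>
    (if v = u then stepWeight k L b (2 * u) else 0) +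
      (if (v : ℕ) = u + 1 then stepWeight k L b (2 * u + 1) else 0)

/-- The total weight of the walks from `u` to `m` that spell the word `S`, on the staircase with
vertex set all of `ℕ`. -/
noncomputable def walkPoly (k : Type*) [Field k] (L : List Bool) (m : ℕ) :
    List Bool → ℕ → MvPolynomial ℕ k
  | [], u => if u = m then 1 else 0
  | b :: S, u => stepWeight k L b (2 * u) * walkPoly k L m S u +
      stepWeight k L b (2 * u + 1) * walkPoly k L m S (u + 1)

/-- The exponent vector of `x_j x_{j+1} ⋯ x_{N-1}`. -/
noncomputable def tailExp (N j : ℕ) : ℕ →₀ ℕ :=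
  ∑ i ∈ Finset.Ico j N, Finsupp.single i 1

lemma tailExp_apply (N j i : ℕ) : tailExp N j i = if j ≤ i ∧ i < N then 1 else 0 := by
  simp [tailExp, Finsupp.finsetSum_apply, Finsupp.single_apply]

lemma tailExp_sub (N j : ℕ) :
    tailExp N j - Finsupp.single j 1 = tailExp N (j + 1) := by
  ext i
  simp only [Finsupp.tsub_apply, tailExp_apply, Finsupp.single_apply]
  split_ifs <;> omega

lemma coeff_stepWeight_mul (k : Type*) [Field k] (L : List Bool) (b : Bool) (i : ℕ)
    (e : ℕ →₀ ℕ) (p : MvPolynomial ℕ k) :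
    coeff e (stepWeight k L b i * p) =
      if L[i]? = some b ∧ e i ≠ 0 then coeff (e - Finsupp.single i 1) p else 0 := by
  unfold stepWeight
  by_cases h : L[i]? = some b
  · simp [h, coeff_X_mul']
  · simp [h]

/-- Walks never go back: a walk starting at `u` does not use the steps below `2u`. -/
lemma coeff_walkPoly_eq_zero (k : Type*) [Field k] (L : List Bool) (m : ℕ) (S : List Bool) :
    ∀ (u j : ℕ) (e : ℕ →₀ ℕ), j < 2 * u → e j ≠ 0 → coeff e (walkPoly k L m S u) = 0 := by
  induction S with
  | nil =>
    intro u j e _ he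
    have : (0 : ℕ →₀ ℕ) ≠ e := by rintro rfl; simp at he
    unfold walkPoly
    split_ifs <;> simp [coeff_one, this]
  | cons b S ih =>
    intro u j e hj he
    have key : ∀ i, j < i → (e - Finsupp.single i 1 : ℕ →₀ ℕ) j ≠ 0 := by
      intro i hi
      rw [Finsupp.tsub_apply, Finsupp.single_apply, if_neg (by omega)]
      simpa using he
    simp only [walkPoly, coeff_add, coeff_stepWeight_mul]
    rw [ih u j _ hj (key _ (by omega)), ih (u + 1) j _ (by omega) (key _ (by omega))]
    simp

/-- With `N = L.length`, the only walk from `⌊j/2⌋` to `⌊N/2⌋` that uses each of the steps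
`j, …, N-1` exactly once and no others takes them in order, and it spells `L.drop j`. -/
lemma coeff_walkPoly (k : Type*) [Field k] (L : List Bool) (S : List Bool) :
    ∀ j ≤ L.length, coeff (tailExp L.length j) (walkPoly k L (L.length / 2) S (j / 2)) =
      if S = L.drop j then 1 else 0 := by
  induction S with
  | nil =>
    intro j hj
    rcases hj.eq_or_lt with rfl | hj
    · simp [walkPoly, tailExp]
    · have h0 : (0 : ℕ →₀ ℕ) ≠ tailExp L.length j := by
        intro h
        have := DFunLike.congr_fun h j
        simp [tailExp_apply, hj] at this
      have h1 : ([] : List Bool) ≠ L.drop j := by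
        intro h
        have := congrArg List.length h
        simp at this
        omega
      unfold walkPoly
      rw [if_neg h1]
      split_ifs <;> simp [coeff_one, h0]
  | cons b S ih =>
    intro j hj
    simp only [walkPoly, coeff_add, coeff_stepWeight_mul]
    rcases hj.eq_or_lt with rfl | hj
    · simp [tailExp]
    · have hstep : (if L[j]? = some b ∧ tailExp L.length j j ≠ 0 then
          coeff (tailExp L.length j - Finsupp.single j 1)
            (walkPoly k L (L.length / 2) S ((j + 1) / 2)) else 0) =
          if b :: S = L.drop j then (1 : k) else 0 := by
        rw [tailExp_sub, ih (j + 1) hj, List.drop_eq_getElem_cons hj, tailExp_apply,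
          List.getElem?_eq_getElem hj]
        by_cases hb : L[j] = b
        · simp [hb, hj]
        · rw [if_neg (by simp [hb]), if_neg fun h => hb (List.cons.inj h).1.symm]
      rw [← hstep]
      obtain ⟨u, rfl | rfl⟩ := Nat.even_or_odd' j
      · -- Skipping the loop `2u` by moving on to `u + 1` makes it unreachable.
        have h1 : 2 * u / 2 = u := by omega
        have h2 : (2 * u + 1) / 2 = u := by omega
        rw [h1, h2, coeff_walkPoly_eq_zero k L _ S (u + 1) (2 * u) _ (by omega)]
        · simp
        · simp [Finsupp.tsub_apply, tailExp_apply, hj]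
      · -- The loop `2u` does not occur among the steps from `2u + 1` on.
        have h1 : (2 * u + 1) / 2 = u := by omega
        have h2 : (2 * u + 1 + 1) / 2 = u + 1 := by omega
        have h3 : tailExp L.length (2 * u + 1) (2 * u) = 0 := by simp [tailExp_apply]
        rw [h1, h2, h3]
        simp

/-- The bound `L.length < 2 * n` guarantees that no edge of nonzero weight leaves `Fin n`. -/
lemma stairMatrix_prod_apply (k : Type*) [Field k] (L : List Bool) (n : ℕ)
    (hL : L.length < 2 * n) (S : List Bool) (u v : Fin n) :
    (S.map (stairMatrix k L n)).prod u v = walkPoly k L v S u := by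
  induction S generalizing u with
  | nil => simp [walkPoly, Matrix.one_apply, Fin.ext_iff]
  | cons b S ih =>
    simp only [List.map_cons, List.prod_cons, Matrix.mul_apply, ih, walkPoly, stairMatrix,
      Matrix.of_apply, add_mul, Finset.sum_add_distrib, ite_mul, zero_mul]
    congr 1
    · simp
    · by_cases hu : (u : ℕ) + 1 < n
      · rw [Finset.sum_eq_single (⟨u + 1, hu⟩ : Fin n)]
        · simp
        · intro x _ hx
          rw [if_neg]
          intro h
          exact hx (Fin.ext h)
        · simp
      · have hz : stepWeight k L b (2 * u + 1) = 0 := by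
          unfold stepWeight
          rw [List.getElem?_eq_none (by omega)]
          simp
        simp [hz]

/-- An identity on matrices over an infinite field persists over the polynomial ring. -/
lemma wordEval_sum_polynomial (k : Type*) [Field k] [CharZero k] (r n : ℕ)
    (T : Fin r → List Bool) (c : Fin r → k)
    (h : ∀ α β : Matrix (Fin n) (Fin n) k, ∑ s, c s • wordEval (T s) α β = 0)
    (α β : Matrix (Fin n) (Fin n) (MvPolynomial ℕ k)) (u v : Fin n) :
    ∑ s, C (c s) * wordEval (T s) α β u v = 0 := by
  apply MvPolynomial.funext
  intro x
  have h1 := congrFun (congrFun (h ((eval x).mapMatrix α) ((eval x).mapMatrix β)) u) v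
  have h2 : ∀ s, wordEval (T s) ((eval x).mapMatrix α) ((eval x).mapMatrix β) =
      (eval x).mapMatrix (wordEval (T s) α β) := by
    intro s
    simp only [wordEval, map_list_prod, List.map_map]
    congr 2
    funext b
    cases b <;> simp
  simp only [h2, Matrix.sum_apply, Matrix.smul_apply] at h1
  simpa using h1

/-- Pairwise distinct binary words of length at most `d` give linearly independent functions
`(α, β) ↦ w_T(α, β)` on `n × n` matrices over a characteristic-zero field whenever `2n > d`. -/
theorem short_binary_words_linearly_independent (k : Type*) [Field k] [CharZero k]
    (d : ℕ) (hd : 1 ≤ d) (r : ℕ) (T : Fin r → List Bool)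
    (hT : Function.Injective T) (hlen : ∀ s, (T s).length ≤ d)
    (n : ℕ) (hn : d < 2 * n) (c : Fin r → k)
    (h : ∀ α β : Matrix (Fin n) (Fin n) k, ∑ s, c s • wordEval (T s) α β = 0) :
    ∀ s, c s = 0 := by
  intro s
  have hL : (T s).reverse.length < 2 * n := by
    have := hlen s
    simp only [List.length_reverse]
    omega
  have hn0 : 0 < n := by omega
  have h1 := wordEval_sum_polynomial k r n T c h (stairMatrix k (T s).reverse n false)
    (stairMatrix k (T s).reverse n true) ⟨0, hn0⟩ ⟨(T s).reverse.length / 2, by omega⟩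
  have h2 : ∀ t, wordEval (T t) (stairMatrix k (T s).reverse n false)
      (stairMatrix k (T s).reverse n true) =
      ((T t).reverse.map (stairMatrix k (T s).reverse n)).prod := by
    intro t
    unfold wordEval
    congr 2
    funext b
    cases b <;> simp
  simp only [h2, stairMatrix_prod_apply k _ n hL] at h1
  have h3 := congrArg (coeff (tailExp (T s).reverse.length 0)) h1
  have h4 : ∀ t, coeff (tailExp (T s).reverse.length 0)
      (walkPoly k (T s).reverse ((T s).reverse.length / 2) (T t).reverse 0) =
      if t = s then 1 else 0 := by
    intro t
    have := coeff_walkPoly k (T s).reverse (T t).reverse 0 (Nat.zero_le _)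
    simpa [hT.eq_iff] using this
  simpa only [coeff_sum, coeff_C_mul, h4, coeff_zero, mul_ite, mul_one, mul_zero,
    Finset.sum_ite_eq', Finset.sum_ite_eq, Finset.mem_univ, if_true] using h3
end

section
/- Let k be a field of characteristic zero and n ≥ 2, and let S, T ∈ {0,1}^* be distinct binary words. Then the functions M_n(k) × M_n(k) → M_n(k) given by (α, β) ↦ w_S(α, β) and (α, β) ↦ w_T(α, β) are linearly independent over k: if a, b ∈ k satisfy a · w_S(α, β) + b · w_T(α, β) = 0 for all α, β ∈ M_n(k), then a = b = 0. -/
/-- The natural number whose binary digits, least significant first, are the given list. -/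
def binVal : List Bool → ℕ
  | [] => 0
  | t :: L => 2 * binVal L + t.toNat

theorem eq_of_length_eq_of_binVal_eq :
    ∀ L L' : List Bool, L.length = L'.length → binVal L = binVal L' → L = L'
  | [], [], _, _ => rfl
  | [], _ :: _, h, _ => by simp at h
  | _ :: _, [], h, _ => by simp at h
  | t :: L, t' :: L', hlen, hval => by
    simp only [List.length_cons, Nat.add_right_cancel_iff] at hlen
    simp only [binVal] at hval
    have h1 := Bool.toNat_le t
    have h2 := Bool.toNat_le t'
    have ht : t = t' := by
      have h3 : t.toNat = t'.toNat := by omega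
      cases t <;> cases t' <;> simp_all
    have hL : binVal L = binVal L' := by omega
    rw [ht, eq_of_length_eq_of_binVal_eq L L' hlen hL]

/-- The matrix of the affine map `x ↦ c x + v` in the rows and columns `i, j`, with the identity
in the remaining coordinates. -/
def affineMat {k ι : Type*} [Field k] [DecidableEq ι] (i j : ι) (c v : k) : Matrix ι ι k :=
  1 + Matrix.single i i (c - 1) + Matrix.single i j v

theorem affineMat_mul {k ι : Type*} [Field k] [Fintype ι] [DecidableEq ι] {i j : ι}
    (hij : i ≠ j) (c v c' v' : k) :
    affineMat i j c v * affineMat i j c' v' = affineMat i j (c * c') (c * v' + v) := by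
  simp only [affineMat, add_mul, mul_add, one_mul, mul_one, Matrix.single_mul_single_same,
    Matrix.single_mul_single_of_ne _ _ _ _ hij.symm]
  have h1 : c * c' - 1 = (c - 1) + (c' - 1) + (c - 1) * (c' - 1) := by ring
  have h2 : c * v' + v = v' + (c - 1) * v' + v := by ring
  rw [h1, h2]
  simp only [Matrix.single_add]
  abel

theorem prod_map_affineMat {k ι : Type*} [Field k] [Fintype ι] [DecidableEq ι] {i j : ι}
    (hij : i ≠ j) (L : List Bool) :
    (L.map fun t => if t then affineMat i j (2 : k) 1 else affineMat i j 2 0).prod =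
      affineMat i j (2 ^ L.length) (binVal L : k) := by
  induction L with
  | nil => simp [affineMat, binVal]
  | cons t L ih =>
    rw [List.map_cons, List.prod_cons, ih]
    cases t <;> simp [affineMat_mul hij, binVal, pow_succ']

/-- For distinct binary words `S ≠ T` and `n ≥ 2`, the functions `(α, β) ↦ w_S(α, β)` and
`(α, β) ↦ w_T(α, β)` on `n × n` matrices over a characteristic-zero field are linearly
independent. -/
theorem distinct_word_pair_linearly_independent (k : Type*) [Field k] [CharZero k]
    (n : ℕ) (hn : 2 ≤ n) (S T : List Bool) (hST : S ≠ T) (a b : k)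
    (h : ∀ α β : Matrix (Fin n) (Fin n) k,
      a • wordEval S α β + b • wordEval T α β = 0) :
    a = 0 ∧ b = 0 := by
  obtain ⟨i, j, hij⟩ : ∃ i j : Fin n, i ≠ j :=
    ⟨⟨0, by omega⟩, ⟨1, by omega⟩, by simp⟩
  have key := h (affineMat i j 2 0) (affineMat i j 2 1)
  simp only [wordEval, prod_map_affineMat hij] at key
  have hjj := congrFun (congrFun key j) j
  have hii := congrFun (congrFun key i) i
  have hval := congrFun (congrFun key i) j
  simp [affineMat, hij, hij.symm] at hjj hii hval
  have hb : b = -a := by linear_combination hjj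
  subst hb
  by_cases ha : a = 0
  · simp [ha]
  · exfalso
    apply hST
    have hpow : (2 : k) ^ S.length = 2 ^ T.length :=
      mul_left_cancel₀ ha (by linear_combination hii)
    have hv : (binVal S.reverse : k) = binVal T.reverse :=
      mul_left_cancel₀ ha (by linear_combination hval)
    have hlen : S.length = T.length :=
      Nat.pow_right_injective le_rfl (by exact_mod_cast hpow)
    exact List.reverse_injective
      (eq_of_length_eq_of_binVal_eq _ _ (by simpa using hlen) (by exact_mod_cast hv))
end
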